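/- The equation (x - y)^4 + x^4 + (x + y)^4 = z^5 has no integer solutions x, y, z with gcd(x, y) = 1. -/

import Mathlib

/-!
Expanding, `3x⁴ + 12x²y² + 2y⁴ = z⁵`. Hence `3z⁵` is the norm of `3x² + 6y² + y²√30` from `ℤ[√30]`,
and, over `ℤ[√6]` with `δ = 6 - √6`, the product of `z⁵` and the unit `5 - 2√6` is the norm of an
element of `ℤ[√6][√-δ]` whose coordinate at `√-δ` is `xy` up to a factor dividing `2`.

Class groups are avoided as follows. An element `α` of norm `e zᵏ` in `R[√d]`, with second
coordinate prime to `z`, gives a binary quadratic form of determinant `-d` over `R` with leading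
coefficient `z`, and every value `n` of this form gives a factorisation `nᵏ α = ν βᵏ` in which `ν`
has norm `e nᵏ`. It remains to find a small value `n`: over `ℤ` by the classical reduction of
binary forms, over `ℤ[√6]` by Minkowski's theorem and a finite search.

Over `ℤ[√6]`, the small values that can occur force `ν` to lie in `ℤ[√6]`. Modulo a prime above
`5` dividing `δ`, fifth powers have vanishing second coordinate, so `5 ∣ xy`. Over `ℤ[√30]` the
outcome is `9α = (11 + 2√30)ʳ β⁵` with `0 ≤ r < 5`, and modulo `5` the condition `5 ∣ xy` leaves
`r = 0` and `r = 3`. Comparing coordinates, `y²` or `x²` is then a product `5v q` of coprime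
factors, and `q` cannot be a square modulo `3`, respectively `8`.
-/

section Minkowski

open MeasureTheory Module

theorem exists_norm_sum_zsmul_lt {ι E : Type*} [Fintype ι] [Nonempty ι] [DecidableEq ι]
    [NormedAddCommGroup E] [InnerProductSpace ℝ E] (o : OrthonormalBasis ι ℝ E) {v : ι → E}
    (hv : o.toBasis.det v ≠ 0) {r : ℝ} (hr : 0 ≤ r)
    (h : 2 ^ Fintype.card ι * |o.toBasis.det v| <
      r ^ Fintype.card ι * (√Real.pi ^ Fintype.card ι / Real.Gamma (Fintype.card ι / 2 + 1))) :
    ∃ k : ι → ℤ, k ≠ 0 ∧ ‖∑ i, k i • v i‖ < r := by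
  obtain ⟨hind, hspan⟩ := o.toBasis.is_basis_iff_det.2 hv.isUnit
  obtain ⟨b, rfl⟩ : ∃ b : Basis ι ℝ E, b = v := ⟨.mk hind hspan.ge, Basis.coe_mk _ _⟩
  let _ : MeasurableSpace E := borel E
  have : BorelSpace E := ⟨rfl⟩
  have : FiniteDimensional ℝ E := b.finiteDimensional_of_finite
  have : Nontrivial E := b.repr.toEquiv.nontrivial
  have hcard : finrank ℝ E = Fintype.card ι := finrank_eq_card_basis b
  have hcovol : volume (ZSpan.fundamentalDomain b) = ENNReal.ofReal |o.toBasis.det b| := by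
    rw [ZSpan.measure_fundamentalDomain b _ o.toBasis,
      measure_congr (ZSpan.fundamentalDomain_ae_parallelepiped o.toBasis volume),
      o.coe_toBasis, o.volume_parallelepiped, mul_one]
  have hlt : volume (ZSpan.fundamentalDomain b) * 2 ^ finrank ℝ E <
      volume (Metric.ball (0 : E) r) := by
    rw [InnerProductSpace.volume_ball, hcovol, hcard, ← ENNReal.ofReal_pow hr,
      ← ENNReal.ofReal_mul (by positivity), mul_comm, ← ENNReal.ofReal_ofNat 2,
      ← ENNReal.ofReal_pow zero_le_two, ← ENNReal.ofReal_mul (by positivity)]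
    exact (ENNReal.ofReal_lt_ofReal_iff_of_nonneg (by positivity)).2 h
  have : Countable (Submodule.span ℤ (Set.range b)).toAddSubgroup :=
    inferInstanceAs (Countable (Submodule.span ℤ (Set.range b)))
  obtain ⟨⟨x, hx⟩, hx0, hxr⟩ := exists_ne_zero_mem_lattice_of_measure_mul_two_pow_lt_measure
    (ZSpan.isAddFundamentalDomain' b volume) (fun x hx ↦ by simpa using hx)
    (convex_ball 0 r) hlt
  obtain ⟨k, rfl⟩ := (Submodule.mem_span_range_iff_exists_fun ℤ).1 hx
  refine ⟨k, ?_, by simpa using hxr⟩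
  rintro rfl
  simp at hx0

theorem exists_sum_sq_mulVec_lt {ι : Type*} [Fintype ι] [Nonempty ι] [DecidableEq ι]
    {A : Matrix ι ι ℝ} (hA : A.det ≠ 0) {r : ℝ} (hr : 0 ≤ r)
    (h : 2 ^ Fintype.card ι * |A.det| <
      r ^ Fintype.card ι * (√Real.pi ^ Fintype.card ι / Real.Gamma (Fintype.card ι / 2 + 1))) :
    ∃ k : ι → ℤ, k ≠ 0 ∧ ∑ i, A.mulVec (fun j ↦ k j) i ^ 2 < r ^ 2 := by
  have hdet : (EuclideanSpace.basisFun ι ℝ).toBasis.det (fun j ↦ WithLp.toLp 2 (A.col j)) =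
      A.det := by
    rw [Basis.det_apply]
    congr 1
  obtain ⟨k, hk, hlt⟩ := exists_norm_sum_zsmul_lt _ (hdet ▸ hA) hr (hdet ▸ h)
  refine ⟨k, hk, ?_⟩
  have := pow_lt_pow_left₀ hlt (norm_nonneg _) two_ne_zero
  simpa [EuclideanSpace.norm_sq_eq, Matrix.mulVec, dotProduct, mul_comm] using this

theorem exists_sum_sq_mulVec_lt_of_fin_four {A : Matrix (Fin 4) (Fin 4) ℝ} (hA : A.det ≠ 0) {c : ℝ}
    (hc : 0 ≤ c) (h : 32 * |A.det| < Real.pi ^ 2 * c ^ 2) :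
    ∃ k : Fin 4 → ℤ, k ≠ 0 ∧ ∑ i, A.mulVec (fun j ↦ k j) i ^ 2 < c := by
  have hgamma : Real.Gamma (Fintype.card (Fin 4) / 2 + 1) = 2 := by
    rw [Fintype.card_fin, show ((4 : ℕ) : ℝ) / 2 + 1 = (2 : ℕ) + 1 by norm_num,
      Real.Gamma_nat_eq_factorial, Nat.factorial_two, Nat.cast_ofNat]
  have sqrt_pow_four {x : ℝ} (hx : 0 ≤ x) : √x ^ 4 = x ^ 2 := by
    rw [pow_mul √x 2 2, Real.sq_sqrt hx]
  obtain ⟨k, hk, hlt⟩ := exists_sum_sq_mulVec_lt hA (Real.sqrt_nonneg c) (by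
    rw [hgamma, Fintype.card_fin, sqrt_pow_four Real.pi_pos.le, sqrt_pow_four hc]
    linarith)
  exact ⟨k, hk, by rwa [Real.sq_sqrt hc] at hlt⟩

/-- The left-hand side is the coordinate at `1` of `(z u + τ v)² + (6 - √6) v²`, where
`τ = t + t' √6`, `u = k 0 + k 1 √6` and `v = k 2 + k 3 √6`. -/
theorem exists_ne_zero_quaternary_form_lt {z : ℝ} (hz : 0 < z) (t t' : ℝ) :
    ∃ k : Fin 4 → ℤ, k ≠ 0 ∧ (z * k 0 + t * k 2 + 6 * t' * k 3) ^ 2 +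
      6 * (z * k 1 + t' * k 2 + t * k 3) ^ 2 + 6 * ((k 2 : ℝ) - k 3) ^ 2 + 30 * (k 3 : ℝ) ^ 2 <
        11 * z := by
  set A : Matrix (Fin 4) (Fin 4) ℝ :=
    !![z, 0, t, 6 * t'; 0, √6 * z, √6 * t', √6 * t; 0, 0, √6, -√6; 0, 0, 0, √30] with hA
  have hdet : A.det = 6 * √30 * z ^ 2 := by
    rw [Matrix.det_of_isUpperTriangular fun i j hij ↦ by
      fin_cases i <;> fin_cases j <;> simp_all]
    rw [Fin.prod_univ_four]
    change z * (√6 * z) * √6 * √30 = _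
    linear_combination √30 * z ^ 2 * Real.sq_sqrt (show (0 : ℝ) ≤ 6 by norm_num)
  have hvol : 32 * |A.det| < Real.pi ^ 2 * (11 * z) ^ 2 := by
    have h30 : √30 < 5.5 := by rw [Real.sqrt_lt' (by norm_num)]; norm_num
    rw [hdet, abs_of_pos (by positivity)]
    calc 32 * (6 * √30 * z ^ 2) < 3.14 ^ 2 * (11 * z) ^ 2 := by nlinarith [pow_pos hz 2]
      _ ≤ Real.pi ^ 2 * (11 * z) ^ 2 := by gcongr; exact Real.pi_gt_d2.le
  obtain ⟨k, hk, hlt⟩ :=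
    exists_sum_sq_mulVec_lt_of_fin_four (by rw [hdet]; positivity) (by positivity) hvol
  refine ⟨k, hk, hlt.trans_eq' ?_⟩
  have h6 : √6 ^ 2 = 6 := Real.sq_sqrt (by norm_num)
  have h30 : √30 ^ 2 = 30 := Real.sq_sqrt (by norm_num)
  simp only [hA, Matrix.mulVec, dotProduct, Fin.sum_univ_four, Matrix.of_apply, Matrix.cons_val]
  linear_combination ((z * k 1 + t' * k 2 + t * k 3) ^ 2 + ((k 2 : ℝ) - k 3) ^ 2) * h6 +
    (k 3 : ℝ) ^ 2 * h30

end Minkowski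

section BinaryForm

variable {R : Type*} [CommRing R]

/-- The binary quadratic form `a X² + 2 b X Y + c Y²`, of determinant `a c - b²`, evaluated at
`(u, v)`. -/
def quadForm (a b c u v : R) : R := a * u ^ 2 + 2 * b * u * v + c * v ^ 2

/-- The values of the form `a X² + 2 b X Y + c Y²` at nonzero vectors. -/
def quadValues (a b c : R) : Set R := {n | ∃ u v, (u ≠ 0 ∨ v ≠ 0) ∧ quadForm a b c u v = n}

theorem mul_quadForm (a b c u v : R) :
    a * quadForm a b c u v = (a * u + b * v) ^ 2 + (a * c - b ^ 2) * v ^ 2 := by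
  unfold quadForm; ring

theorem quadForm_mem_quadValues {a b c u v : R} (h : u ≠ 0 ∨ v ≠ 0) :
    quadForm a b c u v ∈ quadValues a b c := ⟨u, v, h, rfl⟩

theorem left_mem_quadValues [Nontrivial R] (a b c : R) : a ∈ quadValues a b c :=
  ⟨1, 0, by simp, by simp [quadForm]⟩

theorem right_mem_quadValues [Nontrivial R] (a b c : R) : c ∈ quadValues a b c :=
  ⟨0, 1, by simp, by simp [quadForm]⟩

theorem quadValues_subset_of_det_eq_one {a b c p q r s τ : R} (hdet : p * s - q * r = 1)
    (hτ : τ = a * p * r + b * (p * s + q * r) + c * q * s) :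
    quadValues (quadForm a b c p q) τ (quadForm a b c r s) ⊆ quadValues a b c := by
  rintro _ ⟨X, Y, hXY, rfl⟩
  refine ⟨X * p + Y * r, X * q + Y * s, ?_, by unfold quadForm; rw [hτ]; ring⟩
  contrapose! hXY
  obtain ⟨h₁, h₂⟩ := hXY
  exact ⟨by linear_combination s * h₁ - r * h₂ - X * hdet,
    by linear_combination p * h₂ - q * h₁ - Y * hdet⟩

theorem exists_quadValues_subset_of_isCoprime {a b c u v : R} (h : IsCoprime u v) :
    ∃ τ m, quadForm a b c u v * m - τ ^ 2 = a * c - b ^ 2 ∧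
      quadValues (quadForm a b c u v) τ m ⊆ quadValues a b c := by
  obtain ⟨s, r, hsr⟩ := h
  refine ⟨_, _, ?_, quadValues_subset_of_det_eq_one (r := -r) (s := s)
    (by linear_combination hsr) rfl⟩
  unfold quadForm
  linear_combination (a * c - b ^ 2) * (s * u + r * v + 1) * hsr

theorem quadValues_translate_subset (a b c k : R) :
    quadValues a (b + a * k) (quadForm a b c k 1) ⊆ quadValues a b c := by
  have h := quadValues_subset_of_det_eq_one (a := a) (b := b) (c := c) (p := 1) (q := 0) (r := k)
    (s := 1) (by ring) rfl
  convert h using 1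
  congr 1
  · unfold quadForm; ring
  · ring

theorem quadValues_units_smul_subset (a b c : R) (ε : Rˣ) :
    quadValues (ε ^ 2 * a) b (↑ε⁻¹ ^ 2 * c) ⊆ quadValues a b c := by
  have h := quadValues_subset_of_det_eq_one (a := a) (b := b) (c := c) (p := (ε : R)) (q := 0)
    (r := 0) (s := ↑ε⁻¹) (by simp) rfl
  convert h using 1
  congr 1
  · unfold quadForm; ring
  · simp
  · unfold quadForm; ring

theorem exists_isCoprime_of_isBezout [IsBezout R] [IsDomain R] {u v : R} (h : u ≠ 0 ∨ v ≠ 0) :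
    ∃ g u' v', g ≠ 0 ∧ IsCoprime u' v' ∧ u = g * u' ∧ v = g * v' := by
  obtain ⟨u', hu⟩ := IsBezout.gcd_dvd_left u v
  obtain ⟨v', hv⟩ := IsBezout.gcd_dvd_right u v
  obtain ⟨x, y, hxy⟩ := IsBezout.gcd_eq_sum u v
  have hg : IsBezout.gcd u v ≠ 0 := by
    intro hg
    rw [hg, zero_mul] at hu hv
    exact h.elim (· hu) (· hv)
  refine ⟨_, u', v', hg, ⟨x, y, mul_left_cancel₀ hg ?_⟩, hu, hv⟩
  linear_combination hxy - x * hu - y * hv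

theorem exists_quadValues_subset_forall_le [IsBezout R] [IsDomain R] (f : R → ℕ)
    (hf : ∀ g n, g ≠ 0 → f n ≤ f (g ^ 2 * n)) (a b c : R) :
    ∃ n τ m, n * m - τ ^ 2 = a * c - b ^ 2 ∧ quadValues n τ m ⊆ quadValues a b c ∧
      ∀ k ∈ quadValues a b c, f n ≤ f k := by
  obtain ⟨_, ⟨u, v, huv, rfl⟩, hmin⟩ := WellFounded.has_min (measure f).wf (quadValues a b c)
    ⟨a, left_mem_quadValues a b c⟩
  obtain ⟨g, u, v, hg, hcop, rfl, rfl⟩ := exists_isCoprime_of_isBezout huv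
  obtain ⟨τ, m, hdet, hsub⟩ := exists_quadValues_subset_of_isCoprime (a := a) (b := b) (c := c) hcop
  refine ⟨_, τ, m, hdet, hsub, fun k hk ↦ ?_⟩
  calc f (quadForm a b c u v) ≤ f (g ^ 2 * quadForm a b c u v) := hf g _ hg
    _ = f (quadForm a b c (g * u) (g * v)) := by congr 1; unfold quadForm; ring
    _ ≤ f k := not_lt.1 (hmin k hk)

end BinaryForm
section IntegerForm

theorem exists_two_mul_abs_add_mul_le {a : ℤ} (ha : a ≠ 0) (b : ℤ) :
    ∃ k : ℤ, 2 * |b + a * k| ≤ |a| := by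
  refine ⟨-round (b / a : ℚ), ?_⟩
  have ha' : (a : ℚ) ≠ 0 := mod_cast ha
  have h := mul_le_mul_of_nonneg_left (abs_sub_round (b / a : ℚ)) (abs_nonneg (a : ℚ))
  rw [← abs_mul, mul_sub, mul_div_cancel₀ _ ha'] at h
  have h' : 2 * |(b : ℚ) + a * -round (b / a : ℚ)| ≤ |(a : ℚ)| := by
    rw [mul_neg, ← sub_eq_add_neg]; linarith
  exact_mod_cast h'

theorem exists_quadValues_subset_reduced {a b c : ℤ} (h : ¬ IsSquare (b ^ 2 - a * c)) :
    ∃ n τ m, n * m - τ ^ 2 = a * c - b ^ 2 ∧ quadValues n τ m ⊆ quadValues a b c ∧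
      2 * |τ| ≤ |n| ∧ |n| ≤ |m| := by
  obtain ⟨n, τ, m, hdet, hsub, hmin⟩ := exists_quadValues_subset_forall_le Int.natAbs
    (fun g n hg ↦ by
      rw [Int.natAbs_mul]
      exact Nat.le_mul_of_pos_left _ (Int.natAbs_pos.2 (pow_ne_zero 2 hg))) a b c
  have hn : n ≠ 0 := by
    rintro rfl
    exact h ⟨τ, by linear_combination hdet⟩
  obtain ⟨k, hk⟩ := exists_two_mul_abs_add_mul_le hn τ
  have hsub' := (quadValues_translate_subset n τ m k).trans hsub
  refine ⟨n, τ + n * k, _, by unfold quadForm; linear_combination hdet, hsub', hk, ?_⟩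
  exact sq_le_sq.1 <| Int.natAbs_le_iff_sq_le.1 (hmin _ (hsub' (right_mem_quadValues _ _ _)))

theorem exists_mem_quadValues_of_det_eq_neg_thirty {a b c : ℤ} (h : a * c - b ^ 2 = -30) :
    ∃ n ∈ quadValues a b c, n = 1 ∨ n = -1 ∨ n = 3 ∨ n = -3 := by
  have hsq : ¬ IsSquare (b ^ 2 - a * c) := by
    rw [show b ^ 2 - a * c = 30 by linarith]; norm_num
  obtain ⟨n, τ, m, hdet, hsub, hτ, hnm⟩ := exists_quadValues_subset_reduced hsq
  rw [h] at hdet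
  have hn : |n| ≤ 5 := by
    have h₁ : |n| ^ 2 ≤ |τ ^ 2 - 30| := by
      rw [show τ ^ 2 - 30 = n * m by linarith, abs_mul, sq]
      gcongr
    have h₂ := sq_abs τ
    have := abs_nonneg τ
    rcases abs_cases (τ ^ 2 - 30) with h₃ | h₃ <;> nlinarith
  have hτ' : |τ| ≤ 2 := by omega
  have hτn : 4 * τ ^ 2 ≤ n ^ 2 := by
    rw [← sq_abs τ, ← sq_abs n]; nlinarith [abs_nonneg τ]
  have hn0 : n ≠ 0 := by
    rintro rfl
    exact hsq ⟨τ, by linear_combination hdet - h⟩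
  have hcases : (n = 1 ∨ n = -1 ∨ n = 3 ∨ n = -3) ∨ n = 2 ∧ τ = 0 ∧ m = -15 ∨
      n = -2 ∧ τ = 0 ∧ m = 15 ∨ n = 5 ∧ τ = 0 ∧ m = -6 ∨ n = -5 ∧ τ = 0 ∧ m = 6 := by
    obtain ⟨hn, hn'⟩ := abs_le.1 hn
    obtain ⟨hτ, hτ''⟩ := abs_le.1 hτ'
    interval_cases n <;> interval_cases τ <;> omega
  have hval (u v : ℤ) (huv : u ≠ 0 ∨ v ≠ 0) : quadForm n τ m u v ∈ quadValues a b c :=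
    hsub (quadForm_mem_quadValues huv)
  rcases hcases with hn | ⟨rfl, rfl, rfl⟩ | ⟨rfl, rfl, rfl⟩ | ⟨rfl, rfl, rfl⟩ | ⟨rfl, rfl, rfl⟩
  · exact ⟨n, hsub (left_mem_quadValues n τ m), hn⟩
  · exact ⟨3, by simpa [quadForm] using hval 3 1 (by simp), by simp⟩
  · exact ⟨-3, by simpa [quadForm] using hval 3 1 (by simp), by simp⟩
  · exact ⟨-1, by simpa [quadForm] using hval 1 1 (by simp), by simp⟩
  · exact ⟨1, by simpa [quadForm] using hval 1 1 (by simp), by simp⟩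

end IntegerForm

section Descent

open QuadraticAlgebra

variable {R : Type*} [CommRing R] {d : R}

theorem im_pow_five (β : QuadraticAlgebra R d 0) :
    (β ^ 5).im = 5 * β.re ^ 4 * β.im + 10 * d * β.re ^ 2 * β.im ^ 3 + d ^ 2 * β.im ^ 5 := by
  simp only [pow_succ, pow_zero, one_mul, re_mul, im_mul]; ring

theorem re_pow_five (β : QuadraticAlgebra R d 0) :
    (β ^ 5).re = β.re ^ 5 + 10 * d * β.re ^ 3 * β.im ^ 2 + 5 * d ^ 2 * β.re * β.im ^ 4 := by
  simp only [pow_succ, pow_zero, one_mul, re_mul, im_mul]; ring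

variable {e z : R} {k : ℕ} {α : QuadraticAlgebra R d 0}

/-- The conjugate of `z G + H α` is congruent to `z (star G)` modulo `star α`, and multiplying
the `k`-th powers by `α` makes both sides divisible by `z ^ k`. -/
theorem exists_mul_star_pow_eq_smul (hα : α.norm = e * z ^ k) (G H : QuadraticAlgebra R d 0) :
    ∃ ν, α * star (z • G + H * α) ^ k = z ^ k • ν := by
  obtain ⟨c, hc⟩ := sub_dvd_pow_sub_pow (star (z • G + H * α)) (z • star G) k
  refine ⟨α * star G ^ k + e • (star H * c), ?_⟩
  have hnorm := algebraMap_norm_eq_mul_star α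
  have hstar : star (z • G + H * α) = z • star G + star H * star α := by ext <;> simp
  rw [hα] at hnorm
  rw [hstar] at hc ⊢
  simp only [Algebra.smul_def, map_mul, map_pow] at hc hnorm ⊢
  linear_combination α * hc - star H * c * hnorm

theorem exists_norm_eq_and_smul_eq_mul_pow [IsDomain R] (hz : z ≠ 0) (hα : α.norm = e * z ^ k)
    {n : R} {G H : QuadraticAlgebra R d 0} (hn : (z • G + H * α).norm = z * n) :
    ∃ ν, ν.norm = e * n ^ k ∧ n ^ k • α = ν * (z • G + H * α) ^ k := by
  obtain ⟨ν, hν⟩ := exists_mul_star_pow_eq_smul hα G H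
  set β := z • G + H * α
  have hzk : z ^ k ≠ 0 := pow_ne_zero k hz
  refine ⟨ν, mul_left_cancel₀ (pow_ne_zero 2 hzk) ?_, smul_right_injective _ hzk ?_⟩
  · have h := congrArg QuadraticAlgebra.norm hν
    rw [Algebra.smul_def, map_mul, map_mul, map_pow, QuadraticAlgebra.norm_star,
      QuadraticAlgebra.norm_algebraMap, hα, hn] at h
    linear_combination -h
  · have hβ : β ^ k * star β ^ k = (z * n) ^ k • 1 := by
      rw [← mul_pow, ← algebraMap_norm_eq_mul_star, hn, ← map_pow, Algebra.smul_def, mul_one]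
    simp only [Algebra.smul_def, mul_pow, map_mul, map_pow, mul_one] at hν hβ ⊢
    linear_combination β ^ k * hν - α * hβ

theorem exists_forall_mem_quadValues_exists_smul_eq [IsDomain R] (hk : k ≠ 0) (hz : z ≠ 0)
    (hα : α.norm = e * z ^ k) (hcop : IsCoprime α.im z) :
    ∃ t m, z * m - t ^ 2 = -d ∧ ∀ n ∈ quadValues z t m,
      ∃ β ν, β.norm = z * n ∧ ν.norm = e * n ^ k ∧ n ^ k • α = ν * β ^ k := by
  obtain ⟨k, rfl⟩ := Nat.exists_eq_add_one_of_ne_zero hk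
  obtain ⟨a, b, hab⟩ := hcop
  rw [norm_def] at hα
  set m := a ^ 2 * e * z ^ k - d * b * (1 + a * α.im)
  have hm : z * m - (a * α.re) ^ 2 = -d := by
    simp only [m]
    linear_combination -a ^ 2 * hα - d * (1 + a * α.im) * hab
  refine ⟨a * α.re, m, hm, ?_⟩
  rintro _ ⟨u, v, -, rfl⟩
  have hβ : (z • (⟨u, b * v⟩ : QuadraticAlgebra R d 0) + algebraMap R _ (a * v) * α).norm =
      z * quadForm z (a * α.re) m u v := by
    have hre : (z • (⟨u, b * v⟩ : QuadraticAlgebra R d 0) + algebraMap R _ (a * v) * α).re =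
        z * u + a * α.re * v := by
      simp only [re_add, re_smul, re_mul, algebraMap_re, algebraMap_im, smul_eq_mul]
      ring
    have him : (z • (⟨u, b * v⟩ : QuadraticAlgebra R d 0) + algebraMap R _ (a * v) * α).im = v := by
      simp only [im_add, im_smul, im_mul, algebraMap_re, algebraMap_im, smul_eq_mul]
      linear_combination v * hab
    rw [mul_quadForm, hm, norm_def, hre, him]
    ring
  obtain ⟨ν, hν, h⟩ := exists_norm_eq_and_smul_eq_mul_pow hz ((norm_def α).trans hα) hβ
  exact ⟨_, ν, hβ, hν, h⟩

end Descent

section Euclidean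

theorem isPrincipalIdealRing_of_exists_sub_mul_lt {R : Type*} [CommRing R] (f : R → ℕ)
    (h : ∀ a b : R, b ≠ 0 → ∃ q, f (a - q * b) < f b) : IsPrincipalIdealRing R := by
  refine ⟨fun I ↦ ?_⟩
  rcases eq_or_ne I ⊥ with rfl | hI
  · exact bot_isPrincipal
  obtain ⟨b, ⟨hb, hb0⟩, hmin⟩ := WellFounded.has_min (measure f).wf {b | b ∈ I ∧ b ≠ 0}
    (Submodule.exists_mem_ne_zero_of_ne_bot hI)
  refine ⟨b, le_antisymm (fun a ha ↦ ?_) (I.span_singleton_le_iff_mem.2 hb)⟩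
  obtain ⟨q, hq⟩ := h a b hb0
  have hr : a - q * b = 0 := by
    by_contra hr
    exact hmin _ ⟨I.sub_mem ha (I.mul_mem_left q hb), hr⟩ hq
  exact Ideal.mem_span_singleton'.2 ⟨q, (sub_eq_zero.1 hr).symm⟩

theorem exists_abs_norm_sub_mul_lt {d : ℤ} (hd : ∀ n : ℤ, d ≠ n * n)
    (h : ∀ r s : ℚ, ∃ x y : ℤ, |(r - x) ^ 2 - d * (s - y) ^ 2| < 1) (a : ℤ√d) {b : ℤ√d}
    (hb : b ≠ 0) : ∃ q, |(a - q * b).norm| < |b.norm| := by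
  have hN : (b.norm : ℚ) ≠ 0 := mod_cast mt (Zsqrtd.norm_eq_zero hd b).1 hb
  obtain ⟨x, y, hxy⟩ := h ((a * star b).re / b.norm) ((a * star b).im / b.norm)
  refine ⟨⟨x, y⟩, ?_⟩
  have hmul : (a - ⟨x, y⟩ * b).norm * b.norm =
      ((a * star b).re - x * b.norm) ^ 2 - d * ((a * star b).im - y * b.norm) ^ 2 := by
    simp only [Zsqrtd.norm_def, Zsqrtd.re_sub, Zsqrtd.im_sub, Zsqrtd.re_mul, Zsqrtd.im_mul,
      Zsqrtd.re_star, Zsqrtd.im_star]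
    ring
  have hnorm : ((a - ⟨x, y⟩ * b).norm : ℚ) = b.norm *
      (((a * star b).re / b.norm - x) ^ 2 - d * ((a * star b).im / b.norm - y) ^ 2) := by
    field_simp
    rw [mul_comm _ (x : ℚ), mul_comm _ (y : ℚ)]
    exact_mod_cast hmul
  have hlt : |((a - ⟨x, y⟩ * b).norm : ℚ)| < |(b.norm : ℚ)| := by
    rw [hnorm, abs_mul]
    exact mul_lt_of_lt_one_right (abs_pos.2 hN) hxy
  exact_mod_cast hlt

theorem exists_abs_sub_intCast_sq_sub_lt_one {f w : ℚ} (hf : |f| ≤ 1 / 2) (hw₀ : 0 ≤ w)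
    (hw : w ≤ 3 / 2) (hw' : w ≠ 5 / 4) : ∃ k : ℤ, |(f - k) ^ 2 - w| < 1 := by
  wlog h₀ : 0 ≤ f generalizing f
  · obtain ⟨k, hk⟩ := this (f := -f) (by rwa [abs_neg]) (by linarith)
    refine ⟨-k, ?_⟩
    rwa [show (f - (-k : ℤ)) ^ 2 = (-f - k) ^ 2 by push_cast; ring]
  obtain ⟨-, hf⟩ := abs_le.1 hf
  rcases lt_or_ge w 1 with h₁ | h₁
  · exact ⟨0, by rw [abs_lt]; constructor <;> push_cast <;> nlinarith⟩
  rcases lt_or_ge (w - 1) ((1 - f) ^ 2) with h₂ | h₂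
  · exact ⟨1, by rw [abs_lt]; constructor <;> push_cast <;> nlinarith⟩
  refine ⟨-1, ?_⟩
  have hle : (1 + f) ^ 2 ≤ w + 1 := by nlinarith
  have hne : (1 + f) ^ 2 ≠ w + 1 := by
    intro heq
    have : f = 1 / 2 := by nlinarith
    exact hw' (by rw [this] at heq; linarith)
  have hlt := lt_of_le_of_ne hle hne
  rw [abs_lt]
  constructor <;> push_cast <;> nlinarith

theorem exists_abs_sq_sub_six_mul_sq_lt_one (r s : ℚ) :
    ∃ x y : ℤ, |(r - x) ^ 2 - 6 * (s - y) ^ 2| < 1 := by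
  have hs := sq_le_sq' (abs_le.1 (abs_sub_round s)).1 (abs_le.1 (abs_sub_round s)).2
  have hirr : 6 * (s - round s) ^ 2 ≠ 5 / 4 := by
    intro h
    have h30 : ¬ IsSquare (30 : ℚ) := by norm_num
    exact h30 ⟨12 * (s - round s), by linear_combination -24 * h⟩
  obtain ⟨k, hk⟩ := exists_abs_sub_intCast_sq_sub_lt_one (abs_sub_round r) (by positivity)
    (by linarith) hirr
  exact ⟨round r + k, round s, by rwa [Int.cast_add, ← sub_sub]⟩

theorem six_ne_mul_self (n : ℤ) : 6 ≠ n * n := by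
  intro h
  have h6 : ¬ IsSquare (6 : ℤ) := by norm_num
  exact h6 ⟨n, h⟩

instance : IsDomain (ℤ√6) :=
  have : NoZeroDivisors (ℤ√6) := ⟨fun {a b} h ↦ by
    simpa only [← Zsqrtd.norm_eq_zero six_ne_mul_self, Zsqrtd.norm_mul, mul_eq_zero] using h⟩
  NoZeroDivisors.to_isDomain _

instance : IsPrincipalIdealRing (ℤ√6) :=
  isPrincipalIdealRing_of_exists_sub_mul_lt (Int.natAbs ∘ Zsqrtd.norm) fun a _ hb ↦ by
    obtain ⟨q, hq⟩ := exists_abs_norm_sub_mul_lt six_ne_mul_self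
      (mod_cast exists_abs_sq_sub_six_mul_sq_lt_one) a hb
    exact ⟨q, by simp only [Function.comp_apply]; zify; exact hq⟩

end Euclidean

section TotallyPositive

/-- The element `6 - √6` of norm `30`, the determinant of the forms considered over `ℤ√6`. -/
def delta : ℤ√6 := ⟨6, -1⟩

/-- Positivity in both real embeddings of `ℤ√6`. -/
def IsTotallyPositive (n : ℤ√6) : Prop := 0 < n.re ∧ 0 < n.norm

theorem IsTotallyPositive.mul {m n : ℤ√6} (hm : IsTotallyPositive m) (hn : IsTotallyPositive n) :
    IsTotallyPositive (m * n) := by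
  obtain ⟨hm, hm'⟩ := hm
  obtain ⟨hn, hn'⟩ := hn
  refine ⟨?_, by rw [Zsqrtd.norm_mul]; positivity⟩
  rw [Zsqrtd.norm_def] at hm' hn'
  have hlt : (6 * m.im * n.im) ^ 2 < (m.re * n.re) ^ 2 := by
    calc (6 * m.im * n.im) ^ 2 = (6 * m.im * m.im) * (6 * n.im * n.im) := by ring
      _ < (m.re * m.re) * (n.re * n.re) := by
        apply mul_lt_mul'' (by linarith) (by linarith) <;>
          rw [mul_assoc] <;> exact mul_nonneg (by simp) (mul_self_nonneg _)
      _ = (m.re * n.re) ^ 2 := by ring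
  rw [Zsqrtd.re_mul]
  linarith [(abs_lt.1 (abs_lt_of_sq_lt_sq hlt (by positivity))).1]

theorem re_sq_add_delta_mul_sq (P Q : ℤ√6) : (P ^ 2 + delta * Q ^ 2).re =
    P.re ^ 2 + 6 * P.im ^ 2 + 6 * (Q.re - Q.im) ^ 2 + 30 * Q.im ^ 2 := by
  simp only [delta, sq P, sq Q, Zsqrtd.re_add, Zsqrtd.re_mul, Zsqrtd.im_mul]
  ring

theorem norm_sq_add_delta_mul_sq (P Q : ℤ√6) : (P ^ 2 + delta * Q ^ 2).norm =
    P.norm ^ 2 + 30 * Q.norm ^ 2 + 12 * ((P * star Q).re + (P * star Q).im) ^ 2 +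
      60 * (P * star Q).im ^ 2 := by
  simp only [delta, sq P, sq Q, Zsqrtd.norm_def, Zsqrtd.re_add, Zsqrtd.im_add, Zsqrtd.re_mul,
    Zsqrtd.im_mul, Zsqrtd.re_star, Zsqrtd.im_star]
  ring

theorem zsqrtd_six_norm_ne_zero {a : ℤ√6} (ha : a ≠ 0) : a.norm ≠ 0 :=
  mt (Zsqrtd.norm_eq_zero six_ne_mul_self a).1 ha

theorem isTotallyPositive_sq_add_delta_mul_sq {P Q : ℤ√6} (h : P ≠ 0 ∨ Q ≠ 0) :
    IsTotallyPositive (P ^ 2 + delta * Q ^ 2) := by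
  have hnorm : 0 < (P ^ 2 + delta * Q ^ 2).norm := by
    rw [norm_sq_add_delta_mul_sq]
    rcases h with hP | hQ
    · have := zsqrtd_six_norm_ne_zero hP
      positivity
    · have := zsqrtd_six_norm_ne_zero hQ
      positivity
  have hre : 0 ≤ (P ^ 2 + delta * Q ^ 2).re := by rw [re_sq_add_delta_mul_sq]; positivity
  refine ⟨hre.lt_of_ne' fun h0 ↦ ?_, hnorm⟩
  rw [Zsqrtd.norm_def, h0] at hnorm
  nlinarith [mul_self_nonneg (P ^ 2 + delta * Q ^ 2).im]

theorem isTotallyPositive_sq {a : ℤ√6} (ha : a ≠ 0) : IsTotallyPositive (a ^ 2) := by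
  simpa using isTotallyPositive_sq_add_delta_mul_sq (Q := 0) (.inl ha)

variable {z : ℤ} {t m : ℤ√6}

theorem isTotallyPositive_of_mem_quadValues (hz : 0 < z) (h : z * m - t ^ 2 = delta) {n : ℤ√6}
    (hn : n ∈ quadValues (z : ℤ√6) t m) : IsTotallyPositive n := by
  obtain ⟨u, v, huv, rfl⟩ := hn
  have hne : z * u + t * v ≠ 0 ∨ v ≠ 0 := by
    by_contra! h0
    obtain ⟨hu, rfl⟩ := h0
    rw [mul_zero, add_zero] at hu
    exact huv.elim (· ((mul_eq_zero.1 hu).resolve_left (mod_cast hz.ne'))) (· rfl)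
  obtain ⟨hre, hnorm⟩ := isTotallyPositive_sq_add_delta_mul_sq hne
  rw [← h, ← mul_quadForm] at hre hnorm
  rw [Zsqrtd.norm_mul, Zsqrtd.norm_intCast] at hnorm
  rw [Zsqrtd.re_smul] at hre
  exact ⟨pos_of_mul_pos_right hre hz.le, pos_of_mul_pos_right hnorm (by positivity)⟩

theorem exists_mem_quadValues_re_lt (hz : 0 < z) (h : z * m - t ^ 2 = delta) :
    ∃ n ∈ quadValues (z : ℤ√6) t m, n.re < 11 := by
  obtain ⟨k, hk, hlt⟩ := exists_ne_zero_quaternary_form_lt (z := z) (by exact_mod_cast hz) t.re t.im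
  refine ⟨_, quadForm_mem_quadValues (u := ⟨k 0, k 1⟩) (v := ⟨k 2, k 3⟩) ?_, ?_⟩
  · contrapose! hk
    simp only [Zsqrtd.ext_iff, Zsqrtd.re_zero, Zsqrtd.im_zero] at hk
    ext i
    fin_cases i
    exacts [hk.1.1, hk.1.2, hk.2.1, hk.2.2]
  · have hre := congrArg Zsqrtd.re (mul_quadForm (z : ℤ√6) t m ⟨k 0, k 1⟩ ⟨k 2, k 3⟩)
    rw [h, re_sq_add_delta_mul_sq, Zsqrtd.re_smul] at hre
    simp only [Zsqrtd.re_add, Zsqrtd.im_add, Zsqrtd.re_mul, Zsqrtd.im_mul, Zsqrtd.re_intCast,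
      Zsqrtd.im_intCast] at hre
    refine lt_of_mul_lt_mul_left ?_ hz.le
    rw [hre, mul_comm z 11]
    refine lt_of_eq_of_lt ?_ (mod_cast hlt)
    ring

end TotallyPositive

section Reduction

/-- The fundamental unit `5 + 2√6` of `ℤ√6`. -/
def fundamentalUnit : (ℤ√6)ˣ := ⟨⟨5, 2⟩, ⟨5, -2⟩, by decide, by decide⟩

theorem exists_units_sq_mul_balanced {n : ℤ√6} (hn : IsTotallyPositive n) :
    ∃ ε : (ℤ√6)ˣ, 5 * |(ε ^ 2 * n).im| ≤ 2 * (ε ^ 2 * n).re := by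
  obtain ⟨ε, hε⟩ : ∃ ε : (ℤ√6)ˣ, ∀ η : (ℤ√6)ˣ, (ε ^ 2 * n).re.toNat ≤ (η ^ 2 * n).re.toNat :=
    ⟨_, fun η ↦ Function.argmin_le (fun ε : (ℤ√6)ˣ ↦ (ε ^ 2 * n : ℤ√6).re.toNat) η⟩
  have hmin (η : (ℤ√6)ˣ) : (ε ^ 2 * n).re ≤ (η ^ 2 * (ε ^ 2 * n)).re := by
    have hpos := ((isTotallyPositive_sq (η * ε).ne_zero).mul hn).1
    have h := hε (η * ε)
    rw [Units.val_mul, mul_pow, mul_assoc] at h hpos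
    omega
  have h₁ := hmin fundamentalUnit
  have h₂ := hmin fundamentalUnit⁻¹
  rw [show (fundamentalUnit ^ 2 : ℤ√6) = ⟨49, 20⟩ by decide, Zsqrtd.re_mul _ (_ * _)] at h₁
  rw [show (↑fundamentalUnit⁻¹ ^ 2 : ℤ√6) = ⟨49, -20⟩ by decide, Zsqrtd.re_mul _ (_ * _)] at h₂
  grind

theorem norm_units_sq_mul {d : ℤ} (ε : (ℤ√d)ˣ) (n : ℤ√d) : (ε ^ 2 * n).norm = n.norm := by
  have h : IsUnit (ε : ℤ√d).norm := (Zsqrtd.isUnit_iff_norm_isUnit _).1 ε.isUnit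
  rw [Zsqrtd.norm_mul, sq, Zsqrtd.norm_mul, Int.isUnit_mul_self h, one_mul]

theorem exists_eq_gcd_mul_and_dvd {d : ℤ} {n : ℤ√d} (hn : n ≠ 0) :
    ∃ M : ℤ, n.norm = Int.gcd n.re n.im * M ∧ n ∣ M := by
  have hg : ((Int.gcd n.re n.im : ℤ) : ℤ√d) ≠ 0 := mod_cast ((Zsqrtd.gcd_pos_iff n).2 hn).ne'
  obtain ⟨s, hs⟩ : ((Int.gcd n.re n.im : ℤ) : ℤ√d) ∣ star n := (Zsqrtd.intCast_dvd _ _).2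
    ⟨Int.gcd_dvd_left _ _, by simpa using Int.gcd_dvd_right n.re n.im⟩
  have hnorm : (n.norm : ℤ√d) = (Int.gcd n.re n.im : ℤ) * (n * s) := by
    rw [Zsqrtd.norm_eq_mul_conj, hs]; ring
  obtain ⟨M, hM⟩ : (Int.gcd n.re n.im : ℤ) ∣ n.norm :=
    (Zsqrtd.intCast_dvd_intCast _ _).1 ⟨_, hnorm⟩
  rw [hM, Int.cast_mul] at hnorm
  exact ⟨M, hM, s, Zsqrtd.eq_of_smul_eq_smul_left (mod_cast hg) hnorm⟩

theorem exists_mem_Ico_dvd_mk_sub {d : ℤ} {n : ℤ√d} (hn : 0 < n.norm) (τ : ℤ√d) :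
    ∃ i ∈ Finset.Ico 0 (n.norm / Int.gcd n.re n.im), ∃ j ∈ Finset.Ico 0 (Int.gcd n.re n.im : ℤ),
      n ∣ ⟨i, j⟩ - τ := by
  have hn0 : n ≠ 0 := by
    rintro rfl
    simp at hn
  obtain ⟨M, hM, hnM⟩ := exists_eq_gcd_mul_and_dvd hn0
  have hbezout := Int.gcd_eq_gcd_ab n.re n.im
  have hg : (0 : ℤ) < Int.gcd n.re n.im := mod_cast (Zsqrtd.gcd_pos_iff n).2 hn0
  generalize (Int.gcd n.re n.im : ℤ) = g at *
  have hMpos : 0 < M := pos_of_mul_pos_right (hM ▸ hn) hg.le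
  set w : ℤ√d := (τ.im / g : ℤ) * ⟨Int.gcdB n.re n.im, Int.gcdA n.re n.im⟩
  set k := (τ - n * w).re
  have hk : τ - n * w = ⟨k, τ.im % g⟩ := by
    ext
    · rfl
    · simp only [w, Zsqrtd.im_sub, Zsqrtd.im_mul, Zsqrtd.re_mul, Zsqrtd.re_intCast,
        Zsqrtd.im_intCast, Int.emod_def]
      linear_combination (τ.im / g) * hbezout
  refine ⟨k % M, ?_, τ.im % g, ?_, ?_⟩
  · rw [hM, Int.mul_ediv_cancel_left _ hg.ne', Finset.mem_Ico]
    exact ⟨Int.emod_nonneg k hMpos.ne', Int.emod_lt_of_pos k hMpos⟩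
  · exact Finset.mem_Ico.2 ⟨Int.emod_nonneg _ hg.ne', Int.emod_lt_of_pos _ hg⟩
  · have h : (⟨k % M, τ.im % g⟩ : ℤ√d) - τ = -(n * w + M * (k / M : ℤ)) := by
      have hkM : (⟨k % M, τ.im % g⟩ : ℤ√d) = τ - n * w - M * (k / M : ℤ) := by
        rw [hk]
        ext <;> simp [Int.emod_def]
      rw [hkM]; ring
    rw [h, dvd_neg]
    exact dvd_add (dvd_mul_right _ _) (hnM.mul_right _)

/-- A list containing, up to squares of units, the values of least norm of the forms
`z X² + 2 t X Y + m Y²` over `ℤ√6` with `z` a positive integer and determinant `delta`. -/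
def smallValues : List (ℤ√6) := [1, ⟨5, 2⟩, ⟨5, -2⟩, ⟨3, 1⟩, ⟨3, -1⟩]

/-- Pairs `(X, W)` at which every form `n X² + 2 τ X W + m W²` with small `n` outside `smallValues`
takes a value of smaller norm than `n`. -/
def reducingVectors : List ((ℤ√6) × (ℤ√6)) :=
  [(0, 1), (⟨0, 1⟩, ⟨2, -1⟩), (⟨0, -1⟩, ⟨2, 1⟩), (⟨-6, -1⟩, 1), (⟨-8, 2⟩, 1), (⟨8, -5⟩, ⟨2, 1⟩),
    (⟨-16, -6⟩, 1), (⟨0, -1⟩, 1), (⟨0, 4⟩, ⟨1, -1⟩), (⟨1, -1⟩, ⟨3, 1⟩), (⟨1, 3⟩, ⟨2, -1⟩),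
    (⟨-1, -3⟩, ⟨2, 1⟩), (⟨2, -2⟩, ⟨2, 1⟩), (⟨-9, -1⟩, 1), (⟨6, 2⟩, ⟨2, -1⟩), (⟨14, -8⟩, ⟨2, 1⟩)]

theorem ne_zero_of_mem_reducingVectors : ∀ p ∈ reducingVectors, p.2 ≠ 0 := by decide

/-- The finite search behind the class number computation: `n` runs over the balanced totally
positive elements of norm at most `100`, and `⟨i, j⟩` over the residues modulo `n`. -/
theorem mem_smallValues_or_exists_reducingVectors :
    ∀ a ∈ Finset.Icc (1 : ℤ) 50, ∀ b ∈ Finset.Icc (-20 : ℤ) 20, 5 * |b| ≤ 2 * a →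
    ∀ n : ℤ√6, n = ⟨a, b⟩ → n.norm ∈ Finset.Icc 1 100 →
    ∀ i ∈ Finset.Ico 0 (n.norm / Int.gcd n.re n.im),
    ∀ j ∈ Finset.Ico 0 (Int.gcd n.re n.im : ℤ), ∀ τ : ℤ√6, τ = ⟨i, j⟩ →
    (n.norm : ℤ√6) ∣ star n * (τ ^ 2 + delta) → n ∈ smallValues ∨ ∃ p ∈ reducingVectors,
      ((n * p.1 + τ * p.2) ^ 2 + delta * p.2 ^ 2).norm.natAbs < n.norm.natAbs ^ 2 := by
  simp only [Zsqrtd.intCast_dvd, forall_eq, sq]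
  decide +kernel

theorem natAbs_norm_le_sq_mul (g n : ℤ√6) (hg : g ≠ 0) :
    n.norm.natAbs ≤ (g ^ 2 * n).norm.natAbs := by
  rw [Zsqrtd.norm_mul, Int.natAbs_mul]
  exact Nat.le_mul_of_pos_left _ (Int.natAbs_pos.2 (zsqrtd_six_norm_ne_zero (pow_ne_zero 2 hg)))

theorem exists_quadValues_subset_balanced {z : ℤ} {t m : ℤ√6} (hz : 0 < z)
    (h : z * m - t ^ 2 = delta) : ∃ n τ k : ℤ√6, n * k - τ ^ 2 = delta ∧
      quadValues n τ k ⊆ quadValues (z : ℤ√6) t m ∧ 0 < n.re ∧ n.norm ∈ Finset.Icc 1 100 ∧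
      5 * |n.im| ≤ 2 * n.re ∧
      ∀ l ∈ quadValues (z : ℤ√6) t m, n.norm.natAbs ≤ l.norm.natAbs := by
  have hpos {n : ℤ√6} (hn : n ∈ quadValues (z : ℤ√6) t m) :=
    isTotallyPositive_of_mem_quadValues hz h hn
  obtain ⟨n, τ, k, hdet, hsub, hmin⟩ := exists_quadValues_subset_forall_le
    (fun n : ℤ√6 ↦ n.norm.natAbs) natAbs_norm_le_sq_mul (z : ℤ√6) t m
  rw [h] at hdet
  obtain ⟨ε, hε⟩ := exists_units_sq_mul_balanced (hpos (hsub (left_mem_quadValues n τ k)))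
  have hsub' := (quadValues_units_smul_subset n τ k ε).trans hsub
  have hdet' : (ε ^ 2 * n) * (↑ε⁻¹ ^ 2 * k) - τ ^ 2 = delta := by
    rw [mul_mul_mul_comm, ← mul_pow, Units.mul_inv, one_pow, one_mul, hdet]
  rw [← norm_units_sq_mul ε] at hmin
  generalize (ε ^ 2 * n : ℤ√6) = n', (↑ε⁻¹ ^ 2 * k : ℤ√6) = k' at hε hsub' hdet' hmin
  obtain ⟨hre, hnorm⟩ := hpos (hsub' (left_mem_quadValues _ _ _))
  obtain ⟨l, hl, hlre⟩ := exists_mem_quadValues_re_lt hz h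
  obtain ⟨hlre', hlnorm⟩ := hpos hl
  have hl100 : l.norm ≤ 100 := by
    rw [Zsqrtd.norm_def]
    nlinarith [mul_self_nonneg l.im]
  have hle := hmin l hl
  exact ⟨n', τ, k', hdet', hsub', hre, Finset.mem_Icc.2 (by omega), hε, hmin⟩

theorem exists_mem_quadValues_smallValues {z : ℤ} {t m : ℤ√6} (hz : 0 < z)
    (h : z * m - t ^ 2 = delta) : ∃ n ∈ quadValues (z : ℤ√6) t m, n ∈ smallValues := by
  obtain ⟨n, τ, k, hdet, hsub, hre, hnorm, hbal, hmin⟩ := exists_quadValues_subset_balanced hz h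
  obtain ⟨hnorm₁, hnorm₁₀₀⟩ := Finset.mem_Icc.1 hnorm
  obtain ⟨i, hi, j, hj, e, he⟩ := exists_mem_Ico_dvd_mk_sub hnorm₁ τ
  have hsub' := (quadValues_translate_subset n τ k e).trans hsub
  rw [← he, add_sub_cancel] at hsub'
  have hdet' : n * quadForm n τ k e 1 - ⟨i, j⟩ ^ 2 = delta := by
    rw [mul_quadForm, hdet, ← he]; ring
  generalize quadForm n τ k e 1 = m' at hsub' hdet'
  have hre₅₀ : n.re ≤ 50 := by
    rw [Zsqrtd.norm_def] at hnorm₁₀₀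
    have := sq_le_sq.2 (hbal.trans (le_abs_self _) |>.trans' (abs_mul 5 n.im).le)
    nlinarith
  have him : n.im ∈ Finset.Icc (-20) 20 := Finset.mem_Icc.2 (abs_le.1 (by omega))
  have hre : n.re ∈ Finset.Icc 1 50 := Finset.mem_Icc.2 ⟨hre, hre₅₀⟩
  have hdvd : (n.norm : ℤ√6) ∣ star n * (⟨i, j⟩ ^ 2 + delta) :=
    ⟨m', by rw [← hdet', Zsqrtd.norm_eq_mul_conj]; ring⟩
  obtain hn | ⟨p, hp, hlt⟩ := mem_smallValues_or_exists_reducingVectors _ hre _ him hbal n rfl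
    hnorm i hi j hj _ rfl hdvd
  · exact ⟨n, hsub (left_mem_quadValues n τ k), hn⟩
  · have hle := hmin _ (hsub'
      (quadForm_mem_quadValues (u := p.1) (.inr (ne_zero_of_mem_reducingVectors p hp))))
    rw [← hdet', ← mul_quadForm, Zsqrtd.norm_mul, Int.natAbs_mul, sq] at hlt
    exact absurd (Nat.lt_of_mul_lt_mul_left hlt) hle.not_gt

end Reduction

section DeltaOrder

open QuadraticAlgebra

theorem map_im_pow_five_eq_zero {R S : Type*} [CommRing R] [CommRing S] [CharP S 5] (φ : R →+* S)
    {d : R} (hd : φ d = 0) (β : QuadraticAlgebra R d 0) : φ (β ^ 5).im = 0 := by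
  have h5 : (5 : S) = 0 := mod_cast CharP.cast_eq_zero S 5
  simp only [im_pow_five, map_add, map_mul, map_pow, map_ofNat, hd, h5]
  ring

theorem map_im_eq_zero_of_smul_eq_mul_pow_five {R S : Type*} [CommRing R] [CommRing S] [CharP S 5]
    (φ : R →+* S) {d n : R} (hd : φ d = 0) (hn : IsUnit n) {α β ν : QuadraticAlgebra R d 0}
    (hν : ν.im = 0) (h : n ^ 5 • α = ν * β ^ 5) : φ α.im = 0 := by
  have him := congrArg (φ ∘ QuadraticAlgebra.im) h
  simp only [Function.comp_apply, im_smul, smul_eq_mul, im_mul, hν, zero_mul, add_zero, map_mul,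
    map_im_pow_five_eq_zero φ hd, mul_zero, map_pow] at him
  exact ((hn.map φ).pow 5).mul_right_eq_zero.1 him

/-- The ring `ℤ√6[√-delta]`, in which `z ^ 5` times the unit `5 - 2√6` is a norm. -/
abbrev DeltaOrder := QuadraticAlgebra (ℤ√6) (-delta) 0

theorem norm_eq_sq_add_delta_mul_sq (ν : DeltaOrder) :
    ν.norm = ν.re ^ 2 + delta * ν.im ^ 2 := by
  rw [norm_def]; ring

/-- These two numbers rule out the elements `1` and `3 ± √6` of `smallValues`. -/
theorem re_norm_ne_five_and_ne_twenty_seven (ν : DeltaOrder) : ν.norm.re ≠ 5 ∧ ν.norm.re ≠ 27 := by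
  rw [norm_eq_sq_add_delta_mul_sq, re_sq_add_delta_mul_sq, ← not_or]
  generalize ν.im.re - ν.im.im = c
  generalize ν.re.re = a, ν.re.im = b, ν.im.im = d
  intro h
  have ha := sq_nonneg a
  have hb := sq_nonneg b
  have hc := sq_nonneg c
  have hd := sq_nonneg d
  obtain rfl : d = 0 := sq_eq_zero_iff.1 (by omega)
  have hb' : b ^ 2 ≤ 2 ^ 2 := by omega
  have hc' : c ^ 2 ≤ 2 ^ 2 := by omega
  have ha' : a ^ 2 < 6 ^ 2 := by omega
  obtain ⟨ha₁, ha₂⟩ := abs_lt_of_sq_lt_sq' ha' (by norm_num)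
  obtain ⟨hb₁, hb₂⟩ := abs_le_of_sq_le_sq' hb' (by norm_num)
  obtain ⟨hc₁, hc₂⟩ := abs_le_of_sq_le_sq' hc' (by norm_num)
  interval_cases a <;> interval_cases b <;> interval_cases c <;> omega

theorem im_eq_zero_of_norm_eq_one {ν : DeltaOrder} (h : ν.norm = 1) : ν.im = 0 := by
  have hre := congrArg Zsqrtd.re h
  rw [norm_eq_sq_add_delta_mul_sq, re_sq_add_delta_mul_sq, Zsqrtd.re_one] at hre
  have hsub : (ν.im.re - ν.im.im) ^ 2 = 0 := by nlinarith
  have him : ν.im.im ^ 2 = 0 := by nlinarith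
  rw [sq_eq_zero_iff] at hsub him
  exact Zsqrtd.ext (by simpa [him] using hsub) him

theorem im_eq_zero_of_sq_mul_norm_eq_one {c : ℤ√6} {ν : DeltaOrder} (h : c ^ 2 * ν.norm = 1) :
    ν.im = 0 := by
  have hc : IsUnit c := (isUnit_pow_iff two_ne_zero).1 (.of_mul_eq_one _ h)
  have him : (c • ν).im = 0 := im_eq_zero_of_norm_eq_one (by
    rw [Algebra.smul_def, map_mul, QuadraticAlgebra.norm_algebraMap, h])
  exact (smul_eq_zero.1 him).resolve_left hc.ne_zero

/-- Reduction modulo a prime of `ℤ√6` above `5`, chosen to contain `delta`. -/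
def toZModFive : ℤ√6 →+* ZMod 5 := Zsqrtd.lift ⟨1, by decide⟩

theorem toZModFive_apply (a : ℤ√6) : toZModFive a = a.re + a.im := by
  simp [toZModFive, Zsqrtd.lift]

theorem toZModFive_im_eq_zero_of_norm_eq {α : DeltaOrder} {z : ℤ} (hz : 0 < z)
    (hα : α.norm = ⟨5, -2⟩ * z ^ 5) (hcop : IsCoprime α.im z) : toZModFive α.im = 0 := by
  obtain ⟨t, m, hdet, hmem⟩ := exists_forall_mem_quadValues_exists_smul_eq (by norm_num)
    (mod_cast hz.ne') hα hcop
  rw [neg_neg] at hdet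
  obtain ⟨n, hn, hsmall⟩ := exists_mem_quadValues_smallValues hz hdet
  obtain ⟨β, ν, -, hν, h⟩ := hmem n hn
  have hne (c : ℤ√6) : (c ^ 2 * ν.norm).re ≠ 5 ∧ (c ^ 2 * ν.norm).re ≠ 27 := by
    simpa only [Algebra.smul_def, map_mul, QuadraticAlgebra.norm_algebraMap]
      using re_norm_ne_five_and_ne_twenty_seven (c • ν)
  rw [hν] at hne
  simp only [smallValues, List.mem_cons, List.not_mem_nil, or_false] at hsmall
  have hδ : toZModFive (-delta) = 0 := by decide
  have hunit {c : ℤ√6} (hn : IsUnit n) (hc : c ^ 2 * (⟨5, -2⟩ * n ^ 5) = 1) :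
      toZModFive α.im = 0 :=
    map_im_eq_zero_of_smul_eq_mul_pow_five toZModFive hδ hn
      (im_eq_zero_of_sq_mul_norm_eq_one (hν ▸ hc)) h
  rcases hsmall with rfl | rfl | rfl | rfl | rfl
  · exact absurd (by decide) (hne 1).1
  · exact hunit (c := ⟨5, -2⟩ ^ 2) (.of_mul_eq_one ⟨5, -2⟩ (by decide)) (by decide)
  · exact hunit (c := ⟨5, 2⟩ ^ 3) (.of_mul_eq_one ⟨5, 2⟩ (by decide)) (by decide)
  · exact absurd (by decide) (hne ⟨5, -2⟩).2
  · exact absurd (by decide) (hne (⟨5, 2⟩ ^ 2)).2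

theorem five_dvd_mul_of_eq_pow_five {x y z : ℤ} (hz : 0 < z) (hcop : IsCoprime (2 * (x * y)) z)
    (h : 3 * x ^ 4 + 12 * x ^ 2 * y ^ 2 + 2 * y ^ 4 = z ^ 5) : 5 ∣ x * y := by
  let α : DeltaOrder := ⟨⟨3 * x ^ 2 - 2 * y ^ 2, y ^ 2 - x ^ 2⟩, ⟨-2 * (x * y), x * y⟩⟩
  have hα : α.norm = ⟨5, -2⟩ * z ^ 5 := by
    rw [norm_eq_sq_add_delta_mul_sq, ← Int.cast_pow, ← h]
    ext
    · rw [re_sq_add_delta_mul_sq]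
      simp only [α, Zsqrtd.re_mul, Zsqrtd.re_intCast, Zsqrtd.im_intCast]
      ring
    · simp only [α, delta, sq, Zsqrtd.im_add, Zsqrtd.re_mul, Zsqrtd.im_mul, Zsqrtd.re_intCast,
        Zsqrtd.im_intCast]
      ring
  have hαcop : IsCoprime α.im z := by
    have hdvd : α.im ∣ (2 * (x * y) : ℤ) := ⟨⟨2, 1⟩, by ext <;> simp [α] <;> ring⟩
    have := hcop.map (Int.castRingHom (ℤ√6))
    exact this.of_isCoprime_of_dvd_left hdvd
  have := toZModFive_im_eq_zero_of_norm_eq hz hα hαcop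
  rw [toZModFive_apply] at this
  refine (ZMod.intCast_zmod_eq_zero_iff_dvd _ 5).1 ?_
  simp only [α] at this
  push_cast at this ⊢
  linear_combination -this

end DeltaOrder

section SqrtThirty

open QuadraticAlgebra

theorem exists_eq_smul_of_norm_eq_sq_mul {d p M : ℤ} (hp : Prime p) (hpd : p ∣ d)
    (hd : ¬ p ^ 2 ∣ d) {ν : QuadraticAlgebra ℤ d 0} (h : ν.norm = p ^ 2 * M) :
    ∃ μ : QuadraticAlgebra ℤ d 0, ν = p • μ ∧ μ.norm = M := by
  obtain ⟨e, rfl⟩ := hpd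
  obtain ⟨a, b⟩ := ν
  rw [norm_def] at h
  dsimp only at h
  obtain ⟨a, rfl⟩ : p ∣ a := hp.dvd_of_dvd_pow (n := 2) ⟨p * M + e * b ^ 2, by
    linear_combination h⟩
  have hb : p ∣ e * b ^ 2 := ⟨a ^ 2 - M, mul_left_cancel₀ hp.ne_zero (by linear_combination -h)⟩
  have he : ¬ p ∣ e := fun hpe ↦ hd (sq p ▸ mul_dvd_mul_left p hpe)
  obtain ⟨b, rfl⟩ := hp.dvd_of_dvd_pow ((hp.dvd_or_dvd hb).resolve_left he)
  refine ⟨⟨a, b⟩, by ext <;> simp, mul_left_cancel₀ (pow_ne_zero 2 hp.ne_zero) ?_⟩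
  rw [norm_def]
  linear_combination h

theorem exists_eq_pow_smul_of_norm_eq_pow_mul {d p M : ℤ} (hp : Prime p) (hpd : p ∣ d)
    (hd : ¬ p ^ 2 ∣ d) {k : ℕ} {ν : QuadraticAlgebra ℤ d 0} (h : ν.norm = p ^ (2 * k) * M) :
    ∃ μ : QuadraticAlgebra ℤ d 0, ν = p ^ k • μ ∧ μ.norm = M := by
  induction k generalizing ν with
  | zero => exact ⟨ν, by simp, by simpa using h⟩
  | succ k ih =>
    obtain ⟨ν, rfl, h'⟩ := exists_eq_smul_of_norm_eq_sq_mul hp hpd hd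
      (h.trans (by ring : _ = p ^ 2 * (p ^ (2 * k) * M)))
    obtain ⟨μ, rfl, hμ⟩ := ih h'
    exact ⟨μ, by rw [smul_smul, pow_succ'], hμ⟩

theorem norm_ne_three_and_ne_neg_three_and_ne_neg_one (ν : QuadraticAlgebra ℤ 30 0) :
    ν.norm ≠ 3 ∧ ν.norm ≠ -3 ∧ ν.norm ≠ -1 := by
  have h5 : ∀ a : ZMod 5, a * a ≠ 3 ∧ a * a ≠ -3 := by decide
  have h3 : ∀ a : ZMod 3, a * a ≠ -1 := by decide
  have h30 : (30 : ZMod 5) = 0 ∧ (30 : ZMod 3) = 0 := by decide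
  rw [norm_def]
  refine ⟨fun h ↦ (h5 ν.re).1 ?_, fun h ↦ (h5 ν.re).2 ?_, fun h ↦ h3 ν.re ?_⟩
  · simpa [h30] using congrArg (Int.cast : ℤ → ZMod 5) h
  · simpa [h30] using congrArg (Int.cast : ℤ → ZMod 5) h
  · simpa [h30] using congrArg (Int.cast : ℤ → ZMod 3) h

theorem eq_three_and_exists_eq_smul_of_norm_eq {ν : QuadraticAlgebra ℤ 30 0} {n : ℤ}
    (hn : n = 1 ∨ n = -1 ∨ n = 3 ∨ n = -3) (h : ν.norm = 3 * n ^ 5) :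
    n = 3 ∧ ∃ μ : QuadraticAlgebra ℤ 30 0, ν = (27 : ℤ) • μ ∧ μ.norm = 1 := by
  have hdvd {M : ℤ} (hM : ν.norm = 3 ^ (2 * 3) * M) := exists_eq_pow_smul_of_norm_eq_pow_mul
    Int.prime_three (by norm_num) (by norm_num) hM
  obtain rfl | rfl | rfl | rfl := hn
  · exact absurd h (norm_ne_three_and_ne_neg_three_and_ne_neg_one ν).1
  · exact absurd h (norm_ne_three_and_ne_neg_three_and_ne_neg_one ν).2.1
  · exact ⟨rfl, hdvd h⟩
  · obtain ⟨μ, -, hμ⟩ := hdvd (M := -1) (h.trans (by norm_num))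
    exact absurd hμ (norm_ne_three_and_ne_neg_three_and_ne_neg_one μ).2.2

theorem exists_eq_pow_mul_pow_of_isFundamental {d : ℤ} {a : Pell.Solution₁ d}
    (ha : Pell.IsFundamental a) {k : ℕ} (hk : Odd k) (b : Pell.Solution₁ d) :
    ∃ r < k, ∃ c : Pell.Solution₁ d, b = a ^ r * c ^ k := by
  have hk0 : (k : ℤ) ≠ 0 := mod_cast hk.pos.ne'
  have hzpow (n : ℤ) : ∃ r < k, ∃ c : Pell.Solution₁ d, a ^ n = a ^ r * c ^ k := by
    have hr := Int.emod_nonneg n hk0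
    have hrk := Int.emod_lt_of_pos n (mod_cast hk.pos : (0 : ℤ) < k)
    refine ⟨(n % k).toNat, by omega, a ^ (n / k), ?_⟩
    rw [← zpow_natCast, ← zpow_natCast, ← zpow_mul, ← zpow_add, Int.toNat_of_nonneg hr,
      mul_comm (n / _), Int.emod_add_mul_ediv]
  obtain ⟨n, rfl | rfl⟩ := ha.eq_zpow_or_neg_zpow b
  · exact hzpow n
  · obtain ⟨r, hr, c, hc⟩ := hzpow n
    exact ⟨r, hr, -c, by rw [hc, hk.neg_pow, mul_neg]⟩

theorem isFundamental_eleven_two :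
    Pell.IsFundamental (Pell.Solution₁.mk 11 2 (by norm_num) : Pell.Solution₁ 30) := by
  refine ⟨by simp, by simp, fun {b} hb ↦ ?_⟩
  rw [Pell.Solution₁.x_mk]
  have hprop := b.prop
  by_contra! hlt
  obtain ⟨hy₁, hy₂⟩ := abs_lt_of_sq_lt_sq' (by nlinarith : b.y ^ 2 < 2 ^ 2) (by norm_num)
  generalize b.x = x, b.y = y at *
  interval_cases y <;> interval_cases x <;> omega

/-- The solutions of the Pell equation `x ^ 2 - d * y ^ 2 = 1` as elements of norm one. -/
def pellHom (d : ℤ) : Pell.Solution₁ d →* QuadraticAlgebra ℤ d 0 where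
  toFun a := ⟨a.x, a.y⟩
  map_one' := by ext <;> simp
  map_mul' a b := by ext <;> simp [mul_assoc]

theorem norm_pellHom {d : ℤ} (a : Pell.Solution₁ d) : (pellHom d a).norm = 1 := by
  rw [norm_def, ← a.prop]
  simp only [pellHom, MonoidHom.coe_mk, OneHom.coe_mk]
  ring

theorem exists_pellHom_eq {d : ℤ} {μ : QuadraticAlgebra ℤ d 0} (h : μ.norm = 1) :
    ∃ a, pellHom d a = μ :=
  ⟨.mk μ.re μ.im (by rw [← h, norm_def]; ring), by ext <;> simp [pellHom]⟩

theorem exists_nine_smul_eq_pow_mul_pow {α : QuadraticAlgebra ℤ 30 0} {z : ℤ} (hz : z ≠ 0)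
    (hα : α.norm = 3 * z ^ 5) (hcop : IsCoprime α.im z) :
    ∃ r < 5, ∃ β : QuadraticAlgebra ℤ 30 0, β.norm = 3 * z ∧
      (9 : ℤ) • α = ⟨11, 2⟩ ^ r * β ^ 5 := by
  obtain ⟨t, m, hdet, hmem⟩ := exists_forall_mem_quadValues_exists_smul_eq (by norm_num) hz hα hcop
  obtain ⟨n, hn, hn'⟩ := exists_mem_quadValues_of_det_eq_neg_thirty hdet
  obtain ⟨β, ν, hβ, hν, h⟩ := hmem n hn
  obtain ⟨rfl, μ, rfl, hμ⟩ := eq_three_and_exists_eq_smul_of_norm_eq hn' hν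
  obtain ⟨b, rfl⟩ := exists_pellHom_eq hμ
  obtain ⟨r, hr, c, rfl⟩ := exists_eq_pow_mul_pow_of_isFundamental isFundamental_eleven_two
    (by decide : Odd 5) b
  refine ⟨r, hr, pellHom 30 c * β, by rw [map_mul, norm_pellHom, hβ]; ring, ?_⟩
  have hε : pellHom 30 (.mk 11 2 (by norm_num)) = ⟨11, 2⟩ := by ext <;> simp [pellHom]
  refine smul_right_injective _ (by norm_num : (27 : ℤ) ≠ 0) ?_
  dsimp only
  rw [smul_smul, mul_pow, ← mul_assoc, ← hε, ← map_pow, ← map_pow, ← map_mul,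
    ← smul_mul_assoc, ← h]
  norm_num

theorem pow_eleven_two_mod_five (r : ℕ) :
    (((⟨11, 2⟩ : QuadraticAlgebra ℤ 30 0) ^ r).re : ZMod 5) = 1 ∧
      (((⟨11, 2⟩ : QuadraticAlgebra ℤ 30 0) ^ r).im : ZMod 5) = 2 * r := by
  have h : (11 : ZMod 5) = 1 ∧ (30 : ZMod 5) = 0 := by decide
  induction r with
  | zero => simp
  | succ r ih =>
    simp only [pow_succ, re_mul, im_mul, Int.cast_add, Int.cast_mul, Int.cast_ofNat, ih, h,
      Int.cast_zero]
    push_cast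
    constructor <;> ring

theorem exponent_eq_zero_or_eq_three {x y : ℤ} (hxy : 5 ∣ x * y) (hcop : IsCoprime x y) {r : ℕ}
    (hr : r < 5) {β : QuadraticAlgebra ℤ 30 0}
    (h : (9 : ℤ) • ⟨3 * x ^ 2 + 6 * y ^ 2, y ^ 2⟩ = ⟨11, 2⟩ ^ r * β ^ 5) : r = 0 ∨ r = 3 := by
  have hmod : ∀ s : Fin 5, ∀ a b c : ZMod 5, a * b = 0 → ¬ (a = 0 ∧ b = 0) →
      9 * (3 * a ^ 2 + 6 * b ^ 2) = c → 9 * b ^ 2 = 2 * (s : ℕ) * c → s = 0 ∨ s = 3 := by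
    decide +kernel
  have hβ : ((β ^ 5).im : ZMod 5) = 0 :=
    map_im_pow_five_eq_zero (Int.castRingHom (ZMod 5)) (by decide) β
  obtain ⟨hre, him⟩ := QuadraticAlgebra.ext_iff.1 h
  replace hre := congrArg (Int.cast : ℤ → ZMod 5) hre
  replace him := congrArg (Int.cast : ℤ → ZMod 5) him
  simp only [re_smul, im_smul, smul_eq_mul, re_mul, im_mul, Int.cast_mul, Int.cast_add,
    Int.cast_pow, Int.cast_ofNat, pow_eleven_two_mod_five, hβ, mul_zero, zero_mul, add_zero,
    one_mul, zero_add] at hre him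
  have hne : ¬ ((x : ZMod 5) = 0 ∧ (y : ZMod 5) = 0) := by
    rintro ⟨hx, hy⟩
    have h5 : IsUnit (5 : ℤ) := hcop.isUnit_of_dvd'
      ((ZMod.intCast_zmod_eq_zero_iff_dvd x 5).1 hx) ((ZMod.intCast_zmod_eq_zero_iff_dvd y 5).1 hy)
    exact absurd h5 (by decide)
  have hxy' : (x : ZMod 5) * y = 0 := mod_cast (ZMod.intCast_zmod_eq_zero_iff_dvd _ 5).2 hxy
  exact (hmod ⟨r, hr⟩ x y _ hxy' hne hre him).imp (congrArg Fin.val) (congrArg Fin.val)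

end SqrtThirty

section Endgame

theorem exists_eq_sq_of_sq_eq_mul {a c u v w : ℤ} (hac : 0 ≤ a * c)
    (hcop : IsCoprime w (a * u ^ 2 - 5 * c * v ^ 2))
    (h : w ^ 2 = 5 * v * (a ^ 2 * u ^ 4 + 10 * (a * c) * u ^ 2 * v ^ 2 + 5 * c ^ 2 * v ^ 4)) :
    ∃ s, a ^ 2 * u ^ 4 + 10 * (a * c) * u ^ 2 * v ^ 2 + 5 * c ^ 2 * v ^ 4 = s ^ 2 := by
  set q := a ^ 2 * u ^ 4 + 10 * (a * c) * u ^ 2 * v ^ 2 + 5 * c ^ 2 * v ^ 4 with hq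
  have hau : IsCoprime (5 * v) (a * u ^ 2) := by
    have hdvd : 5 * v ∣ w ^ 2 := ⟨q, h⟩
    have := (hcop.pow_left (m := 2)).of_isCoprime_of_dvd_left hdvd
    rw [show a * u ^ 2 - 5 * c * v ^ 2 = a * u ^ 2 + 5 * v * -(c * v) by ring] at this
    exact IsCoprime.add_mul_left_right_iff.1 this
  have hq' : q = (a * u ^ 2) ^ 2 + 5 * v * (2 * (a * c) * u ^ 2 * v + c ^ 2 * v ^ 3) := by
    rw [hq]; ring
  have hvq : IsCoprime q (5 * v) := hq' ▸ (hau.pow_right.add_mul_left_right _).symm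
  obtain ⟨s, hs | hs⟩ := Int.sq_of_isCoprime hvq (c := w) (by rw [h, mul_comm])
  · exact ⟨s, hs⟩
  · have hnonneg : 0 ≤ q := by positivity
    exact ⟨0, by nlinarith [sq_nonneg s]⟩

theorem three_dvd_of_sq_eq_mul {u v y : ℤ} (hcop : IsCoprime y (3 * u ^ 2 - 10 * v ^ 2))
    (h : y ^ 2 = 5 * v * (9 * u ^ 4 + 60 * u ^ 2 * v ^ 2 + 20 * v ^ 4)) : 3 ∣ y := by
  obtain ⟨s, hs⟩ := exists_eq_sq_of_sq_eq_mul (a := 3) (c := 2) (by norm_num)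
    (by convert hcop using 2; ring) (by rw [h]; ring)
  have hmod : ∀ b c : ZMod 3, 2 * b ^ 4 = c ^ 2 → b = 0 := by decide
  have hv : (v : ZMod 3) = 0 := hmod v s (by
    have h3 : (3 : ZMod 3) = 0 := by decide
    have := congrArg (Int.cast : ℤ → ZMod 3) hs
    push_cast at this
    linear_combination this - (3 * (u : ZMod 3) ^ 4 + 20 * u ^ 2 * v ^ 2 + 6 * v ^ 4) * h3)
  rw [ZMod.intCast_zmod_eq_zero_iff_dvd _ 3] at hv
  exact Int.prime_three.dvd_of_dvd_pow (h ▸ (hv.mul_left 5).mul_right _)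

theorem two_dvd_of_sq_eq_mul {u v x : ℤ} (hcop : IsCoprime x (2 * u ^ 2 - 15 * v ^ 2))
    (h : x ^ 2 = 5 * v * (4 * u ^ 4 + 60 * u ^ 2 * v ^ 2 + 45 * v ^ 4)) : 2 ∣ x := by
  obtain ⟨s, hs⟩ := exists_eq_sq_of_sq_eq_mul (a := 2) (c := 3) (by norm_num)
    (by convert hcop using 2; ring) (by rw [h]; ring)
  have hmod : ∀ a b c : ZMod 8,
      2 ^ 2 * a ^ 4 + 10 * (2 * 3) * a ^ 2 * b ^ 2 + 5 * 3 ^ 2 * b ^ 4 = c ^ 2 → 4 * b = 0 := by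
    decide +kernel
  have hv : ((4 * v : ℤ) : ZMod 8) = 0 := mod_cast hmod u v s (mod_cast congrArg Int.cast hs)
  rw [ZMod.intCast_zmod_eq_zero_iff_dvd _ 8] at hv
  have hv2 : 2 ∣ v := by omega
  exact Int.prime_two.dvd_of_dvd_pow (h ▸ (hv2.mul_left 5).mul_right _)

theorem not_isCoprime_of_five_dvd_mul {x y z : ℤ} (hz : z ≠ 0) (hx : ¬ 2 ∣ x) (hy : ¬ 3 ∣ y)
    (hxz : IsCoprime x z) (hyz : IsCoprime y z) (hxy : 5 ∣ x * y)
    (h : 3 * x ^ 4 + 12 * x ^ 2 * y ^ 2 + 2 * y ^ 4 = z ^ 5) : ¬ IsCoprime x y := by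
  intro hcop
  let α : QuadraticAlgebra ℤ 30 0 := ⟨3 * x ^ 2 + 6 * y ^ 2, y ^ 2⟩
  have hα : α.norm = 3 * z ^ 5 := by
    rw [QuadraticAlgebra.norm_def]
    simp only [α]
    linear_combination 3 * h
  obtain ⟨r, hr, ⟨b, v⟩, hβ, hαβ⟩ := exists_nine_smul_eq_pow_mul_pow hz hα hyz.pow_left
  rw [QuadraticAlgebra.norm_def] at hβ
  obtain ⟨u, rfl⟩ : 3 ∣ b := Int.prime_three.dvd_of_dvd_pow (n := 2)
    ⟨z + 10 * v ^ 2, by linear_combination hβ⟩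
  obtain rfl : z = 3 * u ^ 2 - 10 * v ^ 2 := by linarith
  obtain ⟨hre, him⟩ := QuadraticAlgebra.ext_iff.1 hαβ
  obtain rfl | rfl := exponent_eq_zero_or_eq_three hxy hcop hr hαβ
  · rw [pow_zero, one_mul, im_pow_five, QuadraticAlgebra.im_smul] at him
    exact hy (three_dvd_of_sq_eq_mul (u := u) (v := v) hyz
      (mul_left_cancel₀ (by norm_num : (9 : ℤ) ≠ 0) (by linear_combination him)))
  · have hε : (⟨11, 2⟩ : QuadraticAlgebra ℤ 30 0) ^ 3 = ⟨5291, 966⟩ := by decide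
    rw [hε] at hre him
    simp only [QuadraticAlgebra.re_smul, QuadraticAlgebra.im_smul, QuadraticAlgebra.re_mul,
      QuadraticAlgebra.im_mul, re_pow_five, im_pow_five, smul_eq_mul, α] at hre him
    -- `11 + 2√30` is the square of `√5 + √6`, and
    -- `(√3 u + √10 v) (√5 + √6) = √2 (3 u + 5 v) + √15 (u + 2 v)`.
    refine hx (two_dvd_of_sq_eq_mul (u := 3 * u + 5 * v) (v := -(u + 2 * v)) (x := x) ?_ ?_)
    · convert hxz using 1; ring
    · refine mul_left_cancel₀ (by norm_num : (27 : ℤ) ≠ 0) ?_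
      linear_combination hre - 6 * him

end Endgame

section Coprimality

variable {x y z : ℤ}

theorem not_two_dvd_of_eq_pow_five (hcop : IsCoprime x y)
    (h : 3 * x ^ 4 + 12 * x ^ 2 * y ^ 2 + 2 * y ^ 4 = z ^ 5) : ¬ 2 ∣ x := by
  rintro ⟨x, rfl⟩
  obtain ⟨z, rfl⟩ : 2 ∣ z := Int.prime_two.dvd_of_dvd_pow (n := 5)
    ⟨24 * x ^ 4 + 24 * x ^ 2 * y ^ 2 + y ^ 4, by linear_combination -h⟩
  have hy : 2 ∣ y := Int.prime_two.dvd_of_dvd_pow (n := 4)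
    ⟨8 * z ^ 5 - 12 * x ^ 4 - 12 * x ^ 2 * y ^ 2, by linarith⟩
  exact absurd (hcop.isUnit_of_dvd' (dvd_mul_right 2 x) hy) (by decide)

theorem not_three_dvd_of_eq_pow_five (hcop : IsCoprime x y)
    (h : 3 * x ^ 4 + 12 * x ^ 2 * y ^ 2 + 2 * y ^ 4 = z ^ 5) : ¬ 3 ∣ y := by
  rintro ⟨y, rfl⟩
  obtain ⟨z, rfl⟩ : 3 ∣ z := Int.prime_three.dvd_of_dvd_pow (n := 5)
    ⟨x ^ 4 + 36 * x ^ 2 * y ^ 2 + 54 * y ^ 4, by linear_combination -h⟩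
  have hx : 3 ∣ x := Int.prime_three.dvd_of_dvd_pow (n := 4)
    ⟨27 * z ^ 5 - 12 * x ^ 2 * y ^ 2 - 18 * y ^ 4, by linarith⟩
  exact absurd (hcop.isUnit_of_dvd' hx (dvd_mul_right 3 y)) (by decide)

theorem isCoprime_left_of_eq_pow_five (hcop : IsCoprime x y)
    (h : 3 * x ^ 4 + 12 * x ^ 2 * y ^ 2 + 2 * y ^ 4 = z ^ 5) : IsCoprime x z := by
  have h2 : IsCoprime x 2 := (Int.prime_two.coprime_iff_not_dvd.2
    (not_two_dvd_of_eq_pow_five hcop h)).symm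
  rw [← IsCoprime.pow_right_iff (by norm_num : 0 < 5), ← h,
    show 3 * x ^ 4 + 12 * x ^ 2 * y ^ 2 + 2 * y ^ 4 =
      2 * y ^ 4 + x * (3 * x ^ 3 + 12 * x * y ^ 2) by ring]
  exact (h2.mul_right hcop.pow_right).add_mul_left_right _

theorem isCoprime_right_of_eq_pow_five (hcop : IsCoprime x y)
    (h : 3 * x ^ 4 + 12 * x ^ 2 * y ^ 2 + 2 * y ^ 4 = z ^ 5) : IsCoprime y z := by
  have h3 : IsCoprime y 3 := (Int.prime_three.coprime_iff_not_dvd.2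
    (not_three_dvd_of_eq_pow_five hcop h)).symm
  rw [← IsCoprime.pow_right_iff (by norm_num : 0 < 5), ← h,
    show 3 * x ^ 4 + 12 * x ^ 2 * y ^ 2 + 2 * y ^ 4 =
      3 * x ^ 4 + y * (12 * x ^ 2 * y + 2 * y ^ 3) by ring]
  exact (h3.mul_right hcop.symm.pow_right).add_mul_left_right _

theorem isCoprime_two_of_eq_pow_five (hcop : IsCoprime x y)
    (h : 3 * x ^ 4 + 12 * x ^ 2 * y ^ 2 + 2 * y ^ 4 = z ^ 5) : IsCoprime 2 z := by
  refine Int.prime_two.coprime_iff_not_dvd.2 ?_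
  rintro ⟨z, rfl⟩
  exact not_two_dvd_of_eq_pow_five hcop h (Int.prime_two.dvd_of_dvd_pow (n := 4)
    ⟨16 * z ^ 5 - 6 * x ^ 2 * y ^ 2 - y ^ 4 - x ^ 4, by linarith⟩)

theorem pos_of_eq_pow_five (hcop : IsCoprime x y)
    (h : 3 * x ^ 4 + 12 * x ^ 2 * y ^ 2 + 2 * y ^ 4 = z ^ 5) : 0 < z := by
  have hx : x ≠ 0 := fun hx ↦ not_two_dvd_of_eq_pow_five hcop h (hx ▸ dvd_zero 2)
  exact (Odd.pow_pos_iff (by decide : Odd 5)).1 (h ▸ by positivity)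

end Coprimality

theorem stmt_14 :
    ¬ ∃ x y z : ℤ, Int.gcd x y = 1 ∧ (x - y) ^ 4 + x ^ 4 + (x + y) ^ 4 = z ^ 5 := by
  rintro ⟨x, y, z, hgcd, hxyz⟩
  have hcop : IsCoprime x y := Int.isCoprime_iff_gcd_eq_one.2 hgcd
  have h : 3 * x ^ 4 + 12 * x ^ 2 * y ^ 2 + 2 * y ^ 4 = z ^ 5 := by rw [← hxyz]; ring
  have hz : 0 < z := pos_of_eq_pow_five hcop h
  have hxz : IsCoprime x z := isCoprime_left_of_eq_pow_five hcop h
  have hyz : IsCoprime y z := isCoprime_right_of_eq_pow_five hcop h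
  have h2z : IsCoprime 2 z := isCoprime_two_of_eq_pow_five hcop h
  have h5 : 5 ∣ x * y := five_dvd_mul_of_eq_pow_five hz (h2z.mul_left (hxz.mul_left hyz)) h
  exact not_isCoprime_of_five_dvd_mul hz.ne' (not_two_dvd_of_eq_pow_five hcop h)
    (not_three_dvd_of_eq_pow_five hcop h) hxz hyz h5 h hcop
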